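/- Lifting properties: for every player p ∈ {◦, •} and λ-terms t, u: (1) if t →h u then t^p →hτ u^p (head steps become silent checkers head steps); (2) if t^p →hch s for some checkers term s, then there is a λ-term u with t →h u and s = u^p; (3) t is a head normal form if and only if t^p is a checkers head normal form. -/

import Mathlib

set_option autoImplicit false

/-! ### Players -/

inductive Player : Type
  | white
  | black
deriving DecidableEq

/-- The opposite player. -/
def Player.op : Player → Player
  | .white => .black
  | .black => .white

/-- `gamma p q` is `0` if the players agree (silent) and `1` otherwise (interaction). -/
def Player.gamma (p q : Player) : ℕ := if p = q then 0 else 1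

/-! ### Ordinary λ-terms (de Bruijn representation) -/

inductive Lam : Type
  | var : ℕ → Lam
  | lam : Lam → Lam
  | app : Lam → Lam → Lam
deriving DecidableEq

namespace Lam

/-- Shift the free de Bruijn indices ≥ `d` by one. -/
def liftAt : Lam → ℕ → Lam
  | .var n, d => .var (if n < d then n else n + 1)
  | .lam t, d => .lam (t.liftAt (d + 1))
  | .app t u, d => .app (t.liftAt d) (u.liftAt d)

/-- Capture-avoiding substitution of `u` for the de Bruijn index `x`. -/
def subst : Lam → ℕ → Lam → Lam
  | .var n, x, u => if n = x then u else if x < n then .var (n - 1) else .var n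
  | .lam t, x, u => .lam (t.subst (x + 1) (u.liftAt 0))
  | .app t s, x, u => .app (t.subst x u) (s.subst x u)

end Lam

/-- Root β-rule: `(λx.t) u ↦ t[x:=u]`. -/
inductive LBetaRoot : Lam → Lam → Prop
  | beta (t u : Lam) : LBetaRoot (.app (.lam t) u) (t.subst 0 u)

/-- Root η-rule: `λx. t x ↦ t` with `x ∉ FV(t)` (enforced by the lifting). -/
inductive LEtaRoot : Lam → Lam → Prop
  | eta (t : Lam) : LEtaRoot (.lam (.app (t.liftAt 0) (.var 0))) t

/-- Closure of a root relation under all contexts. -/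
inductive LFull (R : Lam → Lam → Prop) : Lam → Lam → Prop
  | root {t u : Lam} : R t u → LFull R t u
  | lam {t u : Lam} : LFull R t u → LFull R (.lam t) (.lam u)
  | appL {t t' : Lam} (u : Lam) : LFull R t t' → LFull R (.app t u) (.app t' u)
  | appR (t : Lam) {u u' : Lam} : LFull R u u' → LFull R (.app t u) (.app t u')

/-- Closure under applicative spine contexts `⟨·⟩ t1 … tk`. -/
inductive LSpine (R : Lam → Lam → Prop) : Lam → Lam → Prop
  | root {t u : Lam} : R t u → LSpine R t u
  | appL {t t' : Lam} (u : Lam) : LSpine R t t' → LSpine R (.app t u) (.app t' u)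

/-- Closure under head contexts `λx1…xn.⟨·⟩ t1 … tk`. -/
inductive LHead (R : Lam → Lam → Prop) : Lam → Lam → Prop
  | spine {t u : Lam} : LSpine R t u → LHead R t u
  | lam {t u : Lam} : LHead R t u → LHead R (.lam t) (.lam u)

/-- β-reduction. -/
def LBeta : Lam → Lam → Prop := LFull LBetaRoot
/-- η-reduction. -/
def LEta : Lam → Lam → Prop := LFull LEtaRoot
/-- Head reduction. -/
def LHStep : Lam → Lam → Prop := LHead LBetaRoot
/-- Multistep head reduction. -/
def LHSteps : Lam → Lam → Prop := Relation.ReflTransGen LHStep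

/-- β-conversion (reflexive-symmetric-transitive closure of β-reduction). -/
def LBetaConv : Lam → Lam → Prop :=
  Relation.ReflTransGen (fun a b => LBeta a b ∨ LBeta b a)
/-- η-conversion. -/
def LEtaConv : Lam → Lam → Prop :=
  Relation.ReflTransGen (fun a b => LEta a b ∨ LEta b a)

/-- Head normal forms: no head step out of `t`. -/
def Lam.LHNF (t : Lam) : Prop := ∀ u, ¬ LHStep t u

/-- Head convergence: `t ⇓h`. -/
def Lam.HConv (t : Lam) : Prop := ∃ h, LHSteps t h ∧ h.LHNF

/-- Ordinary contexts (one hole). -/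
inductive LCtx : Type
  | hole : LCtx
  | lam : LCtx → LCtx
  | appL : LCtx → Lam → LCtx
  | appR : Lam → LCtx → LCtx

/-- Plugging (allowing variable capture). -/
def LCtx.fill : LCtx → Lam → Lam
  | .hole, t => t
  | .lam C, t => .lam (C.fill t)
  | .appL C u, t => .app (C.fill t) u
  | .appR s C, t => .app s (C.fill t)

/-- Head contextual preorder on λ-terms. -/
def CtxLe (t u : Lam) : Prop := ∀ C : LCtx, (C.fill t).HConv → (C.fill u).HConv

/-! ### Checkers terms -/

inductive CTerm : Type
  | var : ℕ → CTerm
  | lam : Player → CTerm → CTerm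
  | app : Player → CTerm → CTerm → CTerm
deriving DecidableEq

namespace CTerm

/-- Shift the free de Bruijn indices ≥ `d` by one. -/
def liftAt : CTerm → ℕ → CTerm
  | .var n, d => .var (if n < d then n else n + 1)
  | .lam p t, d => .lam p (t.liftAt (d + 1))
  | .app p t u, d => .app p (t.liftAt d) (u.liftAt d)

/-- Capture-avoiding substitution of `u` for the de Bruijn index `x`. -/
def subst : CTerm → ℕ → CTerm → CTerm
  | .var n, x, u => if n = x then u else if x < n then .var (n - 1) else .var n
  | .lam p t, x, u => .lam p (t.subst (x + 1) (u.liftAt 0))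
  | .app p t s, x, u => .app p (t.subst x u) (s.subst x u)

/-- The underlying ordinary λ-term of a checkers term. -/
def untag : CTerm → Lam
  | .var n => .var n
  | .lam _ t => .lam t.untag
  | .app _ t u => .app t.untag u.untag

end CTerm

/-- Player lifting: tag every abstraction and application with player `p`. -/
def Lam.tag : Lam → Player → CTerm
  | .var n, _ => .var n
  | .lam t, p => .lam p (t.tag p)
  | .app t u, p => .app p (t.tag p) (u.tag p)

/-- Silent β root rule: the abstraction and the application carry the same player. -/
inductive SilentRoot : CTerm → CTerm → Prop
  | beta (p : Player) (t u : CTerm) : SilentRoot (.app p (.lam p t) u) (t.subst 0 u)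

/-- Interaction β root rule: the application carries the opposite player of the abstraction. -/
inductive InterRoot : CTerm → CTerm → Prop
  | beta (p : Player) (t u : CTerm) : InterRoot (.app p.op (.lam p t) u) (t.subst 0 u)

/-- Closure of a root relation under all checkers contexts. -/
inductive CFull (R : CTerm → CTerm → Prop) : CTerm → CTerm → Prop
  | root {t u : CTerm} : R t u → CFull R t u
  | lam (p : Player) {t u : CTerm} : CFull R t u → CFull R (.lam p t) (.lam p u)
  | appL (p : Player) {t t' : CTerm} (u : CTerm) : CFull R t t' → CFull R (.app p t u) (.app p t' u)
  | appR (p : Player) (t : CTerm) {u u' : CTerm} : CFull R u u' → CFull R (.app p t u) (.app p t u')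

/-- Closure under applicative spine contexts `⟨·⟩ @_{q1} t1 … @_{qk} tk`. -/
inductive CSpine (R : CTerm → CTerm → Prop) : CTerm → CTerm → Prop
  | root {t u : CTerm} : R t u → CSpine R t u
  | appL (p : Player) {t t' : CTerm} (u : CTerm) : CSpine R t t' → CSpine R (.app p t u) (.app p t' u)

/-- Closure under checkers head contexts `λ_{p1}x1…λ_{pn}xn.⟨·⟩ @_{q1} t1 … @_{qk} tk`. -/
inductive CHead (R : CTerm → CTerm → Prop) : CTerm → CTerm → Prop
  | spine {t u : CTerm} : CSpine R t u → CHead R t u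
  | lam (p : Player) {t u : CTerm} : CHead R t u → CHead R (.lam p t) (.lam p u)

/-- Silent β-reduction `→τ`. -/
def StepTau : CTerm → CTerm → Prop := CFull SilentRoot
/-- Interaction β-reduction `→⊛`. -/
def StepInt : CTerm → CTerm → Prop := CFull InterRoot
/-- Checkers β-reduction `→βch`. -/
def StepBch (t u : CTerm) : Prop := StepTau t u ∨ StepInt t u

/-- Silent head reduction `→hτ`. -/
def HStepTau : CTerm → CTerm → Prop := CHead SilentRoot
/-- Interaction head reduction `→h⊛`. -/
def HStepInt : CTerm → CTerm → Prop := CHead InterRoot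
/-- Checkers head reduction `→hch`. -/
def HStepCh (t u : CTerm) : Prop := HStepTau t u ∨ HStepInt t u

/-- Checkers head normal form. -/
def CTerm.HNF (t : CTerm) : Prop := ∀ u, ¬ HStepCh t u

/-- `BigStep t k` means `t ⇓^k`: the (deterministic) checkers head evaluation of `t`
terminates and performs exactly `k` interaction steps. -/
inductive BigStep : CTerm → ℕ → Prop
  | nf {t : CTerm} : t.HNF → BigStep t 0
  | silent {t u : CTerm} {k : ℕ} : HStepTau t u → BigStep u k → BigStep t k
  | inter {t u : CTerm} {k : ℕ} : HStepInt t u → BigStep u k → BigStep t (k + 1)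

/-- `HRed t n i u`: a checkers head reduction sequence from `t` to `u` of length `n`
containing exactly `i` interaction steps. -/
inductive HRed : CTerm → ℕ → ℕ → CTerm → Prop
  | refl (t : CTerm) : HRed t 0 0 t
  | silent {t u s : CTerm} {n i : ℕ} : HStepTau t u → HRed u n i s → HRed t (n + 1) i s
  | inter {t u s : CTerm} {n i : ℕ} : HStepInt t u → HRed u n i s → HRed t (n + 1) (i + 1) s

/-- Checkers contexts (one hole). -/
inductive CCtx : Type
  | hole : CCtx
  | lam : Player → CCtx → CCtx
  | appL : Player → CCtx → CTerm → CCtx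
  | appR : Player → CTerm → CCtx → CCtx

/-- Plugging (allowing variable capture). -/
def CCtx.fill : CCtx → CTerm → CTerm
  | .hole, t => t
  | .lam p C, t => .lam p (C.fill t)
  | .appL p C u, t => .app p (C.fill t) u
  | .appR p s C, t => .app p s (C.fill t)

/-- Player lifting of ordinary contexts. -/
def LCtx.tag : LCtx → Player → CCtx
  | .hole, _ => .hole
  | .lam C, p => .lam p (C.tag p)
  | .appL C u, p => .appL p (C.tag p) (u.tag p)
  | .appR s C, p => .appR p (s.tag p) (C.tag p)

/-- Checkers interaction preorder `≼ctx⊛` on checkers terms. -/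
def IntCtxLe (t u : CTerm) : Prop :=
  ∀ (C : CCtx) (k : ℕ), BigStep (C.fill t) k → BigStep (C.fill u) k

/-- Checkers interaction improvement `≼imp⊛` on checkers terms. -/
def ImpCtxLe (t u : CTerm) : Prop :=
  ∀ (C : CCtx) (k : ℕ), BigStep (C.fill t) k → ∃ k', k' ≤ k ∧ BigStep (C.fill u) k'

/-- Interaction preorder `⊑int` on ordinary λ-terms, via black lifting. -/
def IntLe (t u : Lam) : Prop := IntCtxLe (t.tag .black) (u.tag .black)

/-- Interaction improvement `⊑int·imp` on ordinary λ-terms, via black lifting. -/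
def ImpLe (t u : Lam) : Prop := ImpCtxLe (t.tag .black) (u.tag .black)

/-- Interaction equivalence `≡int`. -/
def IntEq (t u : Lam) : Prop := IntLe t u ∧ IntLe u t

/-- Silent conversion `=τ`: reflexive-symmetric-transitive closure of `→τ`. -/
def SilentConv : CTerm → CTerm → Prop :=
  Relation.ReflTransGen (fun a b => StepTau a b ∨ StepTau b a)


theorem tag_liftAt (p : Player) (t : Lam) : ∀ d, (t.liftAt d).tag p = (t.tag p).liftAt d := by
  induction t with
  | var n => intro d; rfl
  | lam t ih => intro d; simp [Lam.liftAt, Lam.tag, CTerm.liftAt, ih]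
  | app t u iht ihu => intro d; simp [Lam.liftAt, Lam.tag, CTerm.liftAt, iht, ihu]

theorem tag_subst (p : Player) (t : Lam) :
    ∀ x u, (t.subst x u).tag p = (t.tag p).subst x (u.tag p) := by
  induction t with
  | var n =>
    intro x u
    simp only [Lam.subst, Lam.tag, CTerm.subst]
    split_ifs <;> rfl
  | lam t ih => intro x u; simp [Lam.subst, Lam.tag, CTerm.subst, ih, tag_liftAt]
  | app t s iht ihs => intro x u; simp [Lam.subst, Lam.tag, CTerm.subst, iht, ihs]

theorem spine_tag (p : Player) {t u : Lam} (h : LSpine LBetaRoot t u) :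
    CSpine SilentRoot (t.tag p) (u.tag p) := by
  induction h with
  | root h =>
    cases h with
    | beta t u => rw [tag_subst]; exact .root (.beta p _ _)
  | appL u _ ih => exact .appL p _ ih

theorem head_tag (p : Player) {t u : Lam} (h : LHStep t u) :
    HStepTau (t.tag p) (u.tag p) := by
  induction h with
  | spine h => exact .spine (spine_tag p h)
  | lam _ ih => exact .lam p ih

/-- Any root relation contained in tag-agnostic beta. -/
inductive AnyRoot : CTerm → CTerm → Prop
  | beta (p q : Player) (t u : CTerm) : AnyRoot (.app p (.lam q t) u) (t.subst 0 u)

theorem spine_untag (p : Player) {R : CTerm → CTerm → Prop}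
    (hR : ∀ a b, R a b → AnyRoot a b) (t : Lam) :
    ∀ s, CSpine R (t.tag p) s → ∃ u, LSpine LBetaRoot t u ∧ s = u.tag p := by
  induction t with
  | var n =>
    intro s h
    cases h with
    | root h => cases hR _ _ h
  | lam t ih =>
    intro s h
    cases h with
    | root h => cases hR _ _ h
  | app t v iht ihv =>
    intro s h
    cases h with
    | root h =>
      have h := hR _ _ h
      cases t with
      | var n => cases h
      | app a b => cases h
      | lam t =>
        cases h
        exact ⟨_, .root (.beta t v), (tag_subst p t 0 v).symm⟩
    | appL _ _ h =>
      obtain ⟨u, hu, rfl⟩ := iht _ h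
      exact ⟨_, .appL v hu, rfl⟩

theorem head_untag (p : Player) {R : CTerm → CTerm → Prop}
    (hR : ∀ a b, R a b → AnyRoot a b) (t : Lam) :
    ∀ s, CHead R (t.tag p) s → ∃ u, LHStep t u ∧ s = u.tag p := by
  induction t with
  | var n =>
    intro s h
    cases h with
    | spine h =>
      obtain ⟨u, hu, e⟩ := spine_untag p hR (.var n) _ h
      exact ⟨u, .spine hu, e⟩
  | app a b _ _ =>
    intro s h
    cases h with
    | spine h =>
      obtain ⟨u, hu, e⟩ := spine_untag p hR (.app a b) _ h
      exact ⟨u, .spine hu, e⟩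
  | lam t ih =>
    intro s h
    cases h with
    | spine h =>
      obtain ⟨u, hu, e⟩ := spine_untag p hR (.lam t) _ h
      exact ⟨u, .spine hu, e⟩
    | lam _ h =>
      obtain ⟨u, hu, rfl⟩ := ih _ h
      exact ⟨_, .lam hu, rfl⟩

theorem ch_untag (p : Player) (t : Lam) (s : CTerm) (h : HStepCh (t.tag p) s) :
    ∃ u : Lam, LHStep t u ∧ s = u.tag p := by
  rcases h with h | h
  · exact head_untag p (fun a b h => by cases h; exact .beta _ _ _ _) t s h
  · exact head_untag p (fun a b h => by cases h; exact .beta _ _ _ _) t s h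

/-- Lifting properties of the player liftings. -/
theorem lifting_properties (p : Player) :
    (∀ t u : Lam, LHStep t u → HStepTau (t.tag p) (u.tag p)) ∧
    (∀ (t : Lam) (s : CTerm), HStepCh (t.tag p) s → ∃ u : Lam, LHStep t u ∧ s = u.tag p) ∧
    (∀ t : Lam, t.LHNF ↔ (t.tag p).HNF) := by
  refine ⟨fun t u h => head_tag p h, fun t s h => ch_untag p t s h, fun t => ⟨?_, ?_⟩⟩
  · intro h s hs
    obtain ⟨u, hu, _⟩ := ch_untag p t s hs
    exact h u hu
  · intro h u hu
    exact h _ (.inl (head_tag p hu))
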